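/- arXiv:1907.04400 — 8 statements merged into one kernel-verified Lean document; each statement's English description precedes it below -/
import Mathlib

section
/- Let v_i and v_{i'} be the values of two ads of the same type θ with v_i > v_{i'}, and let α_j and α_{j'} be the discounts of type θ for two slots j < j' with α_j > α_{j'}. Suppose real dual variables u_i, u_{i'}, p_j, p_{j'} satisfy the dual feasibility constraints u_i + p_j ≥ α_j · v_i and u_{i'} + p_{j'} ≥ α_{j'} · v_{i'}. Then it cannot hold simultaneously that the edge from ad i to slot j' is tight (u_i + p_{j'} = α_{j'} · v_i) and the edge from ad i' to slot j is tight (u_{i'} + p_j = α_j · v_{i'}). (Non-crossing lemma.) -/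
/-- **Non-crossing lemma.** For two ads of the same type with values `vi > vi'` and two slots
`j < j'` with discounts `αj > αj'`, if the dual solution satisfies the feasibility constraints
`ui + pj ≥ αj * vi` and `ui' + pj' ≥ αj' * vi'`, then the edges `(i, j')` and `(i', j)` cannot
both be tight. -/
theorem non_crossing
    (vi vi' αj αj' ui ui' pj pj' : ℝ)
    (hv : vi > vi') (hα : αj > αj')
    (hfeas₁ : ui + pj ≥ αj * vi)
    (hfeas₂ : ui' + pj' ≥ αj' * vi') :
    ¬ (ui + pj' = αj' * vi ∧ ui' + pj = αj * vi') := by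
  rintro ⟨htight₁, htight₂⟩
  have hprod : 0 < (αj - αj') * (vi - vi') := mul_pos (sub_pos.mpr hα) (sub_pos.mpr hv)
  linarith
end

section
/- Let A and B be finite sets with |A| = |B| = m, let W : A × B → ℝ be strictly positive edge weights where B is identified with slots indexed 1, …, m, and let v* = 1 + max_{a,j} W(a, j). Define modified weights W'(a, j) = W(a, j) + (m − j) · v*. Then: (i) for every a ∈ A the modified weights are strictly decreasing along the slot order, i.e., W'(a, j) > W'(a, j+1) for all 1 ≤ j < m; and (ii) a perfect matching maximizes total W'-weight if and only if it maximizes total W-weight. Hence every instance of the assignment problem with positive weights is equivalent to an instance in which all m ads agree on the order of the slots with monotonically decreasing values, i.e., an Ad Types instance with k = n ad types. -/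
open Finset

/-- A finite family of reals indexed by two finite types is bounded by its iterated supremum. -/
theorem le_ciSup_ciSup_of_finite {ι κ : Type*} [Finite ι] [Finite κ] (f : ι → κ → ℝ)
    (i : ι) (k : κ) : f i k ≤ ⨆ i, ⨆ k, f i k :=
  (le_ciSup (Set.finite_range (f i)).bddAbove k).trans
    (le_ciSup (f := fun i => ⨆ k, f i k) (Set.finite_range _).bddAbove i)

/-- Adding a term that depends only on the slot shifts the weight of every perfect matching by
the same constant. -/
theorem sum_add_comp_equiv {A B : Type*} [Fintype A] [Fintype B] (W : A → B → ℝ) (c : B → ℝ)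
    (σ : A ≃ B) : ∑ a, (W a (σ a) + c (σ a)) = ∑ a, W a (σ a) + ∑ b, c b := by
  rw [Finset.sum_add_distrib, Equiv.sum_comp σ c]

/-- Reduction of the assignment problem with positive weights to an Ad Types instance with
`k = n` ad types: with `v* = 1 + max W` and modified weights `W'(a, j) = W(a, j) + (m − j)·v*`
(slots indexed `1, …, m`), (i) the modified weights of every ad are strictly decreasing along
the slot order, and (ii) a perfect matching maximizes total `W'`-weight iff it maximizes total
`W`-weight. -/
theorem assignment_reduces_to_ad_types
    {A : Type*} [Fintype A] [Nonempty A] (m : ℕ) (hA : Fintype.card A = m)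
    (W : A → Fin m → ℝ) (hpos : ∀ a j, 0 < W a j)
    (vstar : ℝ) (hvstar : vstar = 1 + ⨆ a, ⨆ j, W a j)
    (W' : A → Fin m → ℝ)
    (hW' : ∀ a (j : Fin m), W' a j = W a j + ((m : ℝ) - ((j : ℕ) + 1)) * vstar) :
    (∀ a : A, ∀ j j' : Fin m, j < j' → W' a j' < W' a j) ∧
    (∀ π : A ≃ Fin m,
      (∀ σ : A ≃ Fin m, ∑ a, W' a (σ a) ≤ ∑ a, W' a (π a)) ↔
      (∀ σ : A ≃ Fin m, ∑ a, W a (σ a) ≤ ∑ a, W a (π a))) := by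
  refine ⟨fun a j j' hjj' => ?_, fun π => ?_⟩
  · have hlt : W a j' < vstar := by
      linarith [le_ciSup_ciSup_of_finite W a j']
    have hstep : ((j : ℕ) : ℝ) + 1 ≤ ((j' : ℕ) : ℝ) := by
      exact_mod_cast Nat.succ_le_of_lt (Fin.lt_def.mp hjj')
    rw [hW', hW']
    nlinarith [hpos a j, hpos a j',
      mul_nonneg (sub_nonneg.mpr hstep) ((hpos a j').trans hlt).le]
  · simp only [hW', sum_add_comp_equiv W (fun j : Fin m => ((m : ℝ) - ((j : ℕ) + 1)) * vstar),
      add_le_add_iff_right]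
end

section
/- Let H be a finite simple graph on vertex set V with |V| = k, and consider the Ad Types instance constructed from H: there are k slots, one ad per vertex (each vertex being its own ad type), all value-per-conversion values equal to 1, all discounts equal to 1, and gap matrix G with G_{uw} = k if {u, w} is an edge of H and G_{uw} = 0 otherwise. Then the maximum total value of a feasible allocation of this instance (which equals the maximum number of allocated ads, since every allocated ad contributes value 1) equals the independence number of H, i.e., the maximum size of an independent set of H. -/
/-- In the Ad Types instance built from a graph `H` on `k` vertices (`k` slots, one ad per
vertex, all values and discounts equal to `1`, gap `G u w = k` if `{u,w} ∈ E(H)` and `0`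
otherwise), the maximum total value of a feasible allocation — which equals the maximum
number `|S|` of allocated ads — equals the independence number of `H`. -/
theorem max_allocation_value_eq_independence_number
    {V : Type*} [Fintype V] (H : SimpleGraph V) [DecidableRel H.Adj]
    (k : ℕ) (hk : Fintype.card V = k)
    (G : V → V → ℕ) (hG : ∀ u w, G u w = if H.Adj u w then k else 0)
    (N : ℕ) :
    IsGreatest {m : ℕ | ∃ (S : Finset V) (σ : V → Fin k),
        Set.InjOn σ ↑S ∧
        (∀ u ∈ S, ∀ w ∈ S, σ u < σ w → G u w < (σ w : ℕ) - (σ u : ℕ)) ∧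
        S.card = m} N ↔
    IsGreatest {m : ℕ | ∃ S : Finset V,
        (∀ u ∈ S, ∀ w ∈ S, ¬ H.Adj u w) ∧ S.card = m} N := by
  have adj_free {S : Finset V} {σ : V → Fin k} (hσ : Set.InjOn σ ↑S)
      (hgap : ∀ u ∈ S, ∀ w ∈ S, σ u < σ w → G u w < (σ w : ℕ) - (σ u : ℕ)) :
      ∀ u ∈ S, ∀ w ∈ S, ¬ H.Adj u w := by
    have not_adj_of_lt : ∀ u ∈ S, ∀ w ∈ S, σ u < σ w → ¬ H.Adj u w := by
      intro u hu w hw hlt hadj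
      have hlt_gap := hgap u hu w hw hlt
      rw [hG, if_pos hadj] at hlt_gap
      have := (σ w).isLt
      omega
    intro u hu w hw hadj
    rcases lt_trichotomy (σ u) (σ w) with hlt | heq | hgt
    · exact not_adj_of_lt u hu w hw hlt hadj
    · exact hadj.ne (hσ hu hw heq)
    · exact not_adj_of_lt w hw u hu hgt hadj.symm
  refine iff_of_eq (congrArg (IsGreatest · N) (Set.ext fun m => ⟨?_, ?_⟩))
  · rintro ⟨S, σ, hσ, hgap, hm⟩
    exact ⟨S, adj_free hσ hgap, hm⟩
  · rintro ⟨S, hS, hm⟩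
    refine ⟨S, Fintype.equivFinOfCardEq hk, (Equiv.injective _).injOn, ?_, hm⟩
    intro u hu w hw hlt
    rw [hG, if_neg (hS u hu w hw)]
    exact Nat.sub_pos_of_lt hlt
end

section
/- Let A be a finite allocation (a finite set of (type, slot) pairs with pairwise distinct slots) that obeys the gap rules given by a k×k matrix G. Let θ_l be an ad type and s* a slot strictly greater than every slot used in A, and suppose that for every ad type θ_m that appears in A, the largest slot s_m occupied by an ad of type θ_m in A satisfies s* − s_m > G_{ml}. Then the allocation A ∪ {(θ_l, s*)} also obeys the gap rules. (This is the augmentation property underlying the correctness of the dynamic program, whose states record only, for each type, the number of allocated ads and the last slot occupied by that type.) -/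
/-- **Augmentation property of the dynamic program.** Let `A` be a finite allocation (a finite
set of (type, slot) pairs with pairwise distinct slots) obeying the gap rules of the matrix
`G`. If `s*` is a slot strictly larger than every slot used in `A`, and for every type `m`
appearing in `A` the largest slot `sm` occupied by type `m` satisfies `s* − sm > G m l`, then
`A ∪ {(l, s*)}` is again an allocation (distinct slots) obeying the gap rules. -/
theorem dp_augmentation
    (k : ℕ) (G : Fin k → Fin k → ℕ) (A : Finset (Fin k × ℕ))
    (hdist : ∀ p ∈ A, ∀ q ∈ A, p.2 = q.2 → p = q)
    (hgap : ∀ p ∈ A, ∀ q ∈ A, p.2 < q.2 → G p.1 q.1 < q.2 - p.2)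
    (l : Fin k) (sstar : ℕ)
    (hlast : ∀ p ∈ A, p.2 < sstar)
    (hnew : ∀ m : Fin k, ∀ sm : ℕ, (m, sm) ∈ A → (∀ s : ℕ, (m, s) ∈ A → s ≤ sm) →
        G m l < sstar - sm) :
    (∀ p ∈ insert (l, sstar) A, ∀ q ∈ insert (l, sstar) A, p.2 = q.2 → p = q) ∧
    (∀ p ∈ insert (l, sstar) A, ∀ q ∈ insert (l, sstar) A, p.2 < q.2 →
        G p.1 q.1 < q.2 - p.2) := by
  have hnew_all : ∀ p ∈ A, G p.1 l < sstar - p.2 := by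
    intro p hp
    obtain ⟨q, hq, hmax⟩ := (A.filter (fun q => q.1 = p.1)).exists_max_image Prod.snd
      ⟨p, by simp [hp]⟩
    simp only [Finset.mem_filter] at hq hmax
    have hlt := hnew p.1 q.2 (hq.2 ▸ hq.1) (fun s hs => hmax (p.1, s) ⟨hs, rfl⟩)
    have hle := hmax p ⟨hp, rfl⟩
    omega
  simp only [Finset.mem_insert]
  constructor
  · rintro p (rfl | hp) q (rfl | hq) h
    · rfl
    · exact absurd h (hlast q hq).ne'
    · exact absurd h (hlast p hp).ne
    · exact hdist p hp q hq h
  · rintro p (rfl | hp) q (rfl | hq) h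
    · exact absurd h (lt_irrefl _)
    · exact absurd h (hlast q hq).not_gt
    · exact hnew_all p hp
    · exact hgap p hp q hq h
end

section
/- Let U (ads) and V (slots) be finite sets with nonnegative edge weights v_{ij}, let OPT denote the maximum weight of a matching, and for an ad i let OPT_{−i} denote the maximum weight of a matching that does not use ad i. Let (u, p) be a feasible dual solution whose value equals OPT (an optimal dual solution). Then for every ad i and every slot j, p_j ≥ v_{ij} − (OPT − OPT_{−i}). In particular, for a pair (i, j) matched in a maximum weight matching, the right-hand side is the VCG price of slot j, so the VCG prices are pointwise lower bounds on the slot prices of every optimal dual solution. -/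
open Finset

/-- A matching in the complete bipartite graph between ads `U` and slots `V`: a set of
ad–slot pairs in which each ad and each slot appears at most once. -/
def IsMatching {U V : Type*} (M : Finset (U × V)) : Prop :=
  ∀ e ∈ M, ∀ e' ∈ M, (e.1 = e'.1 ∨ e.2 = e'.2) → e = e'

/-- Weak duality: a matching whose ads all lie in `S` weighs at most the dual value of the ads
in `S` together with all slots. -/
theorem IsMatching.sum_le_dual {U V : Type*} [Fintype V] {M : Finset (U × V)}
    (hM : IsMatching M) {S : Finset U} (hS : ∀ e ∈ M, e.1 ∈ S)
    {v : U → V → ℝ} {u : U → ℝ} {p : V → ℝ}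
    (hu : ∀ i, 0 ≤ u i) (hp : ∀ j, 0 ≤ p j) (hfeas : ∀ i j, v i j ≤ u i + p j) :
    ∑ e ∈ M, v e.1 e.2 ≤ ∑ i ∈ S, u i + ∑ j, p j := by
  classical
  have hfst : ∑ e ∈ M, u e.1 ≤ ∑ i ∈ S, u i := by
    rw [← sum_image (f := u) fun e he e' he' h => hM e he e' he' (Or.inl h)]
    exact sum_le_sum_of_subset_of_nonneg (image_subset_iff.2 hS) fun i _ _ => hu i
  have hsnd : ∑ e ∈ M, p e.2 ≤ ∑ j, p j := by
    rw [← sum_image (f := p) fun e he e' he' h => hM e he e' he' (Or.inr h)]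
    exact sum_le_sum_of_subset_of_nonneg (subset_univ _) fun j _ _ => hp j
  calc ∑ e ∈ M, v e.1 e.2 ≤ ∑ e ∈ M, (u e.1 + p e.2) := sum_le_sum fun e _ => hfeas e.1 e.2
    _ = ∑ e ∈ M, u e.1 + ∑ e ∈ M, p e.2 := sum_add_distrib
    _ ≤ _ := add_le_add hfst hsnd

/-- **VCG prices lower-bound optimal dual slot prices.** Let `OPT` be the maximum weight of a
matching and `OPTi` the maximum weight of a matching not using ad `i`. If `(u, p)` is a
feasible dual solution whose value equals `OPT`, then `p j ≥ v i j − (OPT − OPTi)` for every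
ad `i` and slot `j`; for a pair `(i, j)` matched in a maximum weight matching the right-hand
side is the VCG price of slot `j`. -/
theorem vcg_prices_are_lowest_dual_prices
    {U V : Type*} [Fintype U] [Fintype V]
    (v : U → V → ℝ) (hv : ∀ i j, 0 ≤ v i j)
    (i : U) (OPT OPTi : ℝ)
    (hOPT : IsGreatest
      {w : ℝ | ∃ M : Finset (U × V), IsMatching M ∧ ∑ e ∈ M, v e.1 e.2 = w} OPT)
    (hOPTi : IsGreatest
      {w : ℝ | ∃ M : Finset (U × V), IsMatching M ∧ (∀ e ∈ M, e.1 ≠ i) ∧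
        ∑ e ∈ M, v e.1 e.2 = w} OPTi)
    (u : U → ℝ) (p : V → ℝ)
    (hu : ∀ i', 0 ≤ u i') (hp : ∀ j, 0 ≤ p j)
    (hfeas : ∀ i' j, v i' j ≤ u i' + p j)
    (hval : ∑ i', u i' + ∑ j, p j = OPT) :
    ∀ j : V, v i j - (OPT - OPTi) ≤ p j := by
  classical
  intro j
  obtain ⟨M, hM, hMi, hMw⟩ := hOPTi.1
  have hdual := hM.sum_le_dual (S := univ.erase i)
    (fun e he => mem_erase.2 ⟨hMi e he, mem_univ _⟩) hu hp hfeas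
  have hsplit := add_sum_erase univ u (mem_univ i)
  linarith [hfeas i j]
end

section
/- In the single-parameter environment with reserve prices and the payment rule of Algorithm 3, truthful bidding is dominant: fix the other agents' bids b_{−i}, the reserves r, and an agent i with true per-unit value v_i. For any choice of welfare-maximizing outcomes (ω_v for bids (v_i, b_{−i}), ω_b for bids (b_i, b_{−i}), and ω' for bids (r_i, b_{−i}), each restricted to the respective sets of accepted bidders), the utility of agent i when bidding v_i is at least her utility when bidding any other amount b_i. -/
open Finset

/-- The welfare of outcome `ω` for bid profile `b` with reserves `r`: the sum of `b j * x j ω`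
over the accepted agents, i.e. those with `b j ≥ r j`. -/
noncomputable def welfare {Ω : Type*} [Fintype Ω] {n : ℕ}
    (x : Fin n → Ω → ℝ) (r b : Fin n → ℝ) (ω : Ω) : ℝ :=
  ∑ j, if r j ≤ b j then b j * x j ω else 0

/-- The payment charged by Algorithm 3 to an accepted agent `i`, where `ω` is the selected
welfare-maximizing outcome for the submitted bids `b` and `ω'` is a welfare-maximizing outcome
for the profile in which `b i` is replaced by the reserve `r i`:
`p_i = Σ_{j ∈ B', j ≠ i} b j x j ω' − Σ_{j ∈ B', j ≠ i} b j x j ω + r i · x i ω'`. -/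
noncomputable def payment {Ω : Type*} [Fintype Ω] {n : ℕ}
    (x : Fin n → Ω → ℝ) (r b : Fin n → ℝ) (i : Fin n) (ω ω' : Ω) : ℝ :=
  (∑ j, if j ≠ i ∧ r j ≤ b j then b j * x j ω' else 0)
    - (∑ j, if j ≠ i ∧ r j ≤ b j then b j * x j ω else 0)
    + r i * x i ω'

/-- The utility of agent `i` with true per-unit value `vi` when she bids `β` (the other bids
being `b`), `ω` is the selected outcome for the resulting profile and `ω'` the outcome used in
the payment rule: `vi * x i ω − p_i` if she is accepted (`β ≥ r i`), and `0` otherwise. -/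
noncomputable def utility {Ω : Type*} [Fintype Ω] {n : ℕ}
    (x : Fin n → Ω → ℝ) (r : Fin n → ℝ) (vi : ℝ) (i : Fin n) (b : Fin n → ℝ) (β : ℝ)
    (ω ω' : Ω) : ℝ :=
  if r i ≤ β then vi * x i ω - payment x r (Function.update b i β) i ω ω' else 0

/-- The welfare of the accepted agents other than `i`. -/
noncomputable def othersWelfare {Ω : Type*} {n : ℕ}
    (x : Fin n → Ω → ℝ) (r b : Fin n → ℝ) (i : Fin n) (ω : Ω) : ℝ :=
  ∑ j, if j ≠ i ∧ r j ≤ b j then b j * x j ω else 0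

theorem othersWelfare_update {Ω : Type*} {n : ℕ}
    (x : Fin n → Ω → ℝ) (r b : Fin n → ℝ) (i : Fin n) (β : ℝ) (ω : Ω) :
    othersWelfare x r (Function.update b i β) i ω = othersWelfare x r b i ω := by
  refine Finset.sum_congr rfl fun j _ => ?_
  by_cases h : j = i <;> simp [h]

theorem welfare_update_of_le {Ω : Type*} [Fintype Ω] {n : ℕ}
    (x : Fin n → Ω → ℝ) (r b : Fin n → ℝ) (i : Fin n) {β : ℝ} (hβ : r i ≤ β) (ω : Ω) :
    welfare x r (Function.update b i β) ω = β * x i ω + othersWelfare x r b i ω := by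
  rw [← othersWelfare_update x r b i β, welfare, othersWelfare,
    ← Finset.add_sum_erase _ _ (Finset.mem_univ i),
    ← Finset.add_sum_erase (Finset.univ) (fun j => if j ≠ i ∧ _ then _ else _)
      (Finset.mem_univ i)]
  simp only [Function.update_self, hβ, if_true, ne_eq, not_true_eq_false, false_and, if_false,
    zero_add]
  congr 1
  refine Finset.sum_congr rfl fun j hj => ?_
  simp [Finset.ne_of_mem_erase hj]

theorem utility_of_le {Ω : Type*} [Fintype Ω] {n : ℕ}
    (x : Fin n → Ω → ℝ) (r : Fin n → ℝ) (vi : ℝ) (i : Fin n) (b : Fin n → ℝ) {β : ℝ}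
    (hβ : r i ≤ β) (ω ω' : Ω) :
    utility x r vi i b β ω ω' = (vi * x i ω + othersWelfare x r b i ω)
      - (r i * x i ω' + othersWelfare x r b i ω') := by
  rw [utility, if_pos hβ, ← othersWelfare_update x r b i β ω,
    ← othersWelfare_update x r b i β ω', payment, othersWelfare, othersWelfare]
  ring

theorem utility_of_lt {Ω : Type*} [Fintype Ω] {n : ℕ}
    (x : Fin n → Ω → ℝ) (r : Fin n → ℝ) (vi : ℝ) (i : Fin n) (b : Fin n → ℝ) {β : ℝ}
    (hβ : β < r i) (ω ω' : Ω) : utility x r vi i b β ω ω' = 0 :=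
  if_neg hβ.not_ge

/-- **Truthful bidding is dominant** under the payment rule of Algorithm 3: for any bid `bi`,
any welfare-maximizing outcomes `ωv` for the truthful profile `(vi, b₋ᵢ)`, `ωb` for the
profile `(bi, b₋ᵢ)`, and `ω'` for the profile `(r i, b₋ᵢ)`, agent `i`'s utility when bidding
her true value `vi` is at least her utility when bidding `bi`. -/
theorem truthful_bidding_dominant {Ω : Type*} [Fintype Ω] [Nonempty Ω] {n : ℕ}
    (x : Fin n → Ω → ℝ) (hx : ∀ i ω, 0 ≤ x i ω)
    (r b : Fin n → ℝ) (i : Fin n) (vi bi : ℝ)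
    (ωv ωb ω' : Ω)
    (hωv : ∀ ω, welfare x r (Function.update b i vi) ω
            ≤ welfare x r (Function.update b i vi) ωv)
    (hωb : ∀ ω, welfare x r (Function.update b i bi) ω
            ≤ welfare x r (Function.update b i bi) ωb)
    (hω' : ∀ ω, welfare x r (Function.update b i (r i)) ω
            ≤ welfare x r (Function.update b i (r i)) ω') :
    utility x r vi i b bi ωb ω' ≤ utility x r vi i b vi ωv ω' := by
  simp only [welfare_update_of_le x r b i le_rfl] at hω'
  rcases le_or_gt (r i) vi with hv | hv
  · simp only [welfare_update_of_le x r b i hv] at hωv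
    rw [utility_of_le x r vi i b hv]
    rcases le_or_gt (r i) bi with hb | hb
    · rw [utility_of_le x r vi i b hb]
      linarith [hωv ωb]
    · rw [utility_of_lt x r vi i b hb]
      linarith [hωv ω', mul_le_mul_of_nonneg_right hv (hx i ω')]
  · rw [utility_of_lt x r vi i b hv]
    rcases le_or_gt (r i) bi with hb | hb
    · rw [utility_of_le x r vi i b hb]
      linarith [hω' ωb, mul_le_mul_of_nonneg_right hv.le (hx i ωb)]
    · rw [utility_of_lt x r vi i b hb]
end

section
/- In the single-parameter environment with reserve prices and the payment rule of Algorithm 3, losers pay nothing: if agent i bids b_i ≥ r_i but receives nothing in the selected welfare-maximizing outcome ω, i.e., x_i(ω) = 0, then her payment p_i = Σ_{j ∈ B', j ≠ i} b_j x_j(ω') − Σ_{j ∈ B', j ≠ i} b_j x_j(ω) + r_i · x_i(ω') equals 0 (for any welfare-maximizing choices of ω and ω'). Agents with b_i < r_i are rejected and pay 0 by definition. -/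
open Finset

/-- The welfare splits into the contribution of the accepted agents other than `i` and that of
an accepted agent `i` bidding `β`; the former does not depend on `i`'s accepted bid. -/
theorem welfare_update_eq_add {Ω : Type*} [Fintype Ω] {n : ℕ}
    (x : Fin n → Ω → ℝ) (r b : Fin n → ℝ) (i : Fin n) {β : ℝ} (hβ : r i ≤ β) (γ : ℝ) (ω : Ω) :
    welfare x r (Function.update b i β) ω =
      (∑ j, if j ≠ i ∧ r j ≤ Function.update b i γ j then
        Function.update b i γ j * x j ω else 0) + β * x i ω := by
  have hsplit : β * x i ω = ∑ j, if j = i then β * x i ω else 0 := by simp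
  rw [welfare, hsplit, ← Finset.sum_add_distrib]
  refine Finset.sum_congr rfl fun j _ => ?_
  by_cases hj : j = i
  · subst hj
    simp [hβ]
  · simp [hj]

/-- **Losers pay nothing** under the payment rule of Algorithm 3: if agent `i` bids
`bi ≥ r i` but receives nothing in the selected welfare-maximizing outcome `ω`
(`x i ω = 0`), then her payment is `0`, for any welfare-maximizing choices of `ω` (for the
profile `(bi, b₋ᵢ)`) and `ω'` (for the profile `(r i, b₋ᵢ)`). -/
theorem losers_pay_nothing {Ω : Type*} [Fintype Ω] [Nonempty Ω] {n : ℕ}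
    (x : Fin n → Ω → ℝ) (hx : ∀ i ω, 0 ≤ x i ω)
    (r b : Fin n → ℝ) (i : Fin n) (bi : ℝ) (hbi : r i ≤ bi)
    (ω ω' : Ω)
    (hω : ∀ ω₀, welfare x r (Function.update b i bi) ω₀
            ≤ welfare x r (Function.update b i bi) ω)
    (hω' : ∀ ω₀, welfare x r (Function.update b i (r i)) ω₀
            ≤ welfare x r (Function.update b i (r i)) ω')
    (hzero : x i ω = 0) :
    payment x r (Function.update b i bi) i ω ω' = 0 := by
  have hle := hω ω'
  have hge := hω' ω
  rw [welfare_update_eq_add x r b i hbi bi, welfare_update_eq_add x r b i hbi bi, hzero] at hle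
  rw [welfare_update_eq_add x r b i le_rfl bi, welfare_update_eq_add x r b i le_rfl bi,
    hzero] at hge
  have hmul := mul_le_mul_of_nonneg_right hbi (hx i ω')
  rw [payment]
  linarith
end

section
/- In the single-parameter environment with reserve prices and the payment rule of Algorithm 3, truthful bidding is individually rational: if agent i's true value satisfies v_i ≥ r_i and she bids b_i = v_i, then for any welfare-maximizing choices of the outcomes ω and ω' her utility v_i · x_i(ω) − p_i is nonnegative; if v_i < r_i, bidding truthfully yields utility exactly 0. -/
open Finset

/-- If `β` meets agent `i`'s reserve, the welfare of the profile `(β, b₋ᵢ)` splits into agent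
`i`'s contribution and the welfare of the other accepted agents. -/
theorem welfare_update_of_reserve_le {Ω : Type*} [Fintype Ω] {n : ℕ}
    (x : Fin n → Ω → ℝ) (r b : Fin n → ℝ) (i : Fin n) {β : ℝ} (hβ : r i ≤ β) (ω : Ω) :
    welfare x r (Function.update b i β) ω = β * x i ω +
      ∑ j, if j ≠ i ∧ r j ≤ Function.update b i β j
        then Function.update b i β j * x j ω else 0 := by
  unfold welfare
  rw [← Finset.add_sum_erase _ _ (Finset.mem_univ i),
    ← Finset.add_sum_erase _ (fun j => if j ≠ i ∧ _ then _ else _) (Finset.mem_univ i)]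
  simp only [Function.update_self, hβ, if_true, ne_eq, not_true_eq_false, false_and, if_false,
    zero_add]
  congr 1
  refine Finset.sum_congr rfl fun j hj => ?_
  simp [Finset.ne_of_mem_erase hj]

/-- **Individual rationality of truthful bidding** under the payment rule of Algorithm 3: for
any welfare-maximizing outcomes `ω` (for the truthful profile `(vi, b₋ᵢ)`) and `ω'` (for the
profile `(r i, b₋ᵢ)`), if `vi ≥ r i` then the truthful utility `vi * x i ω − p_i` is
nonnegative, and if `vi < r i` then the truthful utility is exactly `0`. -/
theorem truthful_individually_rational {Ω : Type*} [Fintype Ω] [Nonempty Ω] {n : ℕ}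
    (x : Fin n → Ω → ℝ) (hx : ∀ i ω, 0 ≤ x i ω)
    (r b : Fin n → ℝ) (i : Fin n) (vi : ℝ)
    (ω ω' : Ω)
    (hω : ∀ ω₀, welfare x r (Function.update b i vi) ω₀
            ≤ welfare x r (Function.update b i vi) ω)
    (hω' : ∀ ω₀, welfare x r (Function.update b i (r i)) ω₀
            ≤ welfare x r (Function.update b i (r i)) ω') :
    (r i ≤ vi → 0 ≤ utility x r vi i b vi ω ω') ∧
    (vi < r i → utility x r vi i b vi ω ω' = 0) := by
  refine ⟨fun h => ?_, fun h => if_neg (not_le.mpr h)⟩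
  have hopt := hω ω'
  rw [welfare_update_of_reserve_le x r b i h, welfare_update_of_reserve_le x r b i h] at hopt
  have hgain : r i * x i ω' ≤ vi * x i ω' := mul_le_mul_of_nonneg_right h (hx i ω')
  rw [utility, if_pos h, payment]
  linarith
end
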